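/- Let f : ℝ → S¹ be a pre-periodic function and f̃ : ℝ → ℝ any lift of f. Then the limit lim_{x→+∞} (f̃(x) − f̃(−x))/(2x) exists and is a rational number; moreover this limit does not depend on the choice of the lift f̃. -/

import Mathlib

open Filter

/-- A continuous function `f : ℝ → ℂ` taking values in the unit circle `S¹` is *pre-periodic*
if for every `ε > 0` there is a positive integer `N` such that
`|f (x + k * N) - f x| < ε` for all integers `k` and all real `x`. -/
def PrePeriodic (f : ℝ → ℂ) : Prop :=
  Continuous f ∧ (∀ x : ℝ, ‖f x‖ = 1) ∧
    ∀ ε : ℝ, 0 < ε → ∃ N : ℕ, 0 < N ∧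
      ∀ (k : ℤ) (x : ℝ), ‖f (x + (k : ℝ) * (N : ℝ)) - f x‖ < ε

/-- `F : ℝ → ℝ` is a lift of `f : ℝ → S¹ ⊆ ℂ` if `F` is continuous and
`f x = e^{2 π i F x}` for all `x`. -/
def IsLift (f : ℝ → ℂ) (F : ℝ → ℝ) : Prop :=
  Continuous F ∧ ∀ x : ℝ, f x = Complex.exp (2 * Real.pi * Complex.I * (F x : ℂ))

/-- A continuous real function staying away from half-integers modulo `1` stays near one integer. -/
lemma near_integer (D : ℝ → ℝ) (hD : Continuous D)
    (hc : ∀ x, 0 < Real.cos (2 * Real.pi * D x)) :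
    ∃ m : ℤ, ∀ x, |D x - m| < 1 / 4 := by
  refine ⟨round (D 0), fun x => ?_⟩
  set m : ℤ := round (D 0) with hm
  have hpi := Real.pi_pos
  have key : ∀ y, 0 < Real.cos (2 * Real.pi * |D y - m|) := by
    intro y
    have h := hc y
    have h2 : Real.cos (2 * Real.pi * |D y - m|) = Real.cos (2 * Real.pi * (D y - m)) := by
      rcases abs_choice (D y - m) with h | h
      · rw [h]
      · rw [h, mul_neg, Real.cos_neg]
    rw [h2]
    have h3 : 2 * Real.pi * (D y - m) = 2 * Real.pi * D y - m * (2 * Real.pi) := by ring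
    rw [h3, Real.cos_sub_int_mul_two_pi]
    exact h
  have h0 : |D 0 - m| < 1 / 4 := by
    by_contra hcon
    push Not at hcon
    have h1 : |D 0 - m| ≤ 1 / 2 := abs_sub_round (D 0)
    have h2 := key 0
    have h3 : Real.cos (2 * Real.pi * |D 0 - m|) ≤ 0 :=
      Real.cos_nonpos_of_pi_div_two_le_of_le (by nlinarith) (by nlinarith)
    linarith
  by_contra hcon
  push Not at hcon
  have hg : Continuous (fun y => |D y - m|) := (hD.sub continuous_const).abs
  obtain ⟨y, hy⟩ := mem_range_of_exists_le_of_exists_ge hg ⟨0, h0.le⟩ ⟨x, hcon⟩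
  have h2 := key y
  simp only at hy
  rw [hy, show 2 * Real.pi * (1 / 4) = Real.pi / 2 by ring, Real.cos_pi_div_two] at h2
  exact lt_irrefl _ h2

lemma cos_pos_of_close (a b : ℝ)
    (h : ‖Complex.exp (2 * Real.pi * Complex.I * (a : ℂ)) -
      Complex.exp (2 * Real.pi * Complex.I * (b : ℂ))‖ < 1) :
    0 < Real.cos (2 * Real.pi * (a - b)) := by
  have e : ∀ t : ℝ, Complex.exp (2 * Real.pi * Complex.I * (t : ℂ)) =
      (Real.cos (2 * Real.pi * t) : ℂ) + (Real.sin (2 * Real.pi * t) : ℂ) * Complex.I := by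
    intro t
    rw [show (2 * Real.pi * Complex.I * (t : ℂ)) = ((2 * Real.pi * t : ℝ) : ℂ) * Complex.I by
      push_cast; ring, Complex.exp_mul_I]
    simp
  have h2 : ‖Complex.exp (2 * Real.pi * Complex.I * (a : ℂ)) -
      Complex.exp (2 * Real.pi * Complex.I * (b : ℂ))‖ ^ 2 < 1 := by
    have := norm_nonneg (Complex.exp (2 * Real.pi * Complex.I * (a : ℂ)) -
      Complex.exp (2 * Real.pi * Complex.I * (b : ℂ)))
    nlinarith
  rw [e, e, ← Complex.normSq_eq_norm_sq, Complex.normSq_apply] at h2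
  simp only [Complex.sub_re, Complex.add_re, Complex.mul_re, Complex.ofReal_re, Complex.ofReal_im,
    Complex.I_re, Complex.I_im, Complex.sub_im, Complex.add_im, Complex.mul_im] at h2
  rw [mul_sub, Real.cos_sub]
  nlinarith [Real.sin_sq_add_cos_sq (2 * Real.pi * a), Real.sin_sq_add_cos_sq (2 * Real.pi * b)]

lemma exists_lift (f : ℝ → ℂ) (hc : Continuous f) (hn : ∀ x, ‖f x‖ = 1) :
    ∃ F : ℝ → ℝ, IsLift f F := by
  let g : C(ℝ, Circle) := ⟨fun x => ⟨f x, by simp [Submonoid.unitSphere, hn x]⟩, by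
    exact hc.subtype_mk _⟩
  obtain ⟨e, he⟩ : ∃ e : ℝ, Circle.exp e = g 0 := ⟨_, Circle.exp_arg (g 0)⟩
  obtain ⟨F, ⟨-, hF⟩, -⟩ := Circle.isCoveringMap_exp.existsUnique_continuousMap_lifts g 0 e he
  refine ⟨fun x => F x / (2 * Real.pi), F.continuous.div_const _, fun x => ?_⟩
  have h1 : Circle.exp (F x) = g x := congrFun hF x
  have h2 : ((Circle.exp (F x) : Circle) : ℂ) = f x := by rw [h1]; rfl
  rw [← h2, Circle.coe_exp]
  have : (Real.pi : ℂ) ≠ 0 := by exact_mod_cast Real.pi_ne_zero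
  congr 1
  push_cast
  field_simp

lemma lift_linear (f : ℝ → ℂ) (hf : PrePeriodic f) (F : ℝ → ℝ) (hF : IsLift f F) :
    ∃ (q : ℚ) (B : ℝ), ∀ x, |F x - q * x| ≤ B := by
  obtain ⟨-, -, hp⟩ := hf
  obtain ⟨N, hN, hp⟩ := hp 1 one_pos
  obtain ⟨hFc, hFe⟩ := hF
  have hm : ∀ k : ℤ, ∃ m : ℤ, ∀ x, |(F (x + k * N) - F x) - m| < 1 / 4 := by
    intro k
    apply near_integer
    · fun_prop
    · intro x
      apply cos_pos_of_close
      rw [← hFe, ← hFe]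
      exact hp k x
  choose m hm using hm
  have hadd : ∀ k : ℤ, m (k + 1) = m k + m 1 := by
    intro k
    have h1 := hm (k + 1) 0
    have h2 := hm k 0
    have h3 := hm 1 (0 + k * N)
    have e : (0 : ℝ) + k * N + (1 : ℤ) * N = 0 + (k + 1 : ℤ) * N := by push_cast; ring
    rw [e] at h3
    rw [abs_lt] at h1 h2 h3
    have l1 : (m (k + 1) : ℝ) < m k + m 1 + 1 := by linarith
    have l2 : (m k : ℝ) + m 1 < m (k + 1) + 1 := by linarith
    have l1' : m (k + 1) < m k + m 1 + 1 := by exact_mod_cast l1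
    have l2' : m k + m 1 < m (k + 1) + 1 := by exact_mod_cast l2
    omega
  have hlin : ∀ k : ℤ, m k = k * m 1 := by
    intro k
    induction k using Int.induction_on with
    | zero => have := hadd 0; simp at this; simpa using this
    | succ i ih => rw [hadd, ih]; ring
    | pred i ih =>
      have := hadd (-i - 1)
      rw [sub_add_cancel, ih] at this
      linear_combination -this
  have hNpos : (0 : ℝ) < N := by exact_mod_cast hN
  obtain ⟨C, hC⟩ := (isCompact_Icc (a := (0 : ℝ)) (b := N)).exists_bound_of_continuousOn
    (f := fun x => F x - (m 1 / N : ℝ) * x) (by fun_prop)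
  refine ⟨(m 1 : ℚ) / N, C + 1 / 4, fun x => ?_⟩
  push_cast
  set k : ℤ := ⌊x / N⌋ with hk
  have f1 : (k : ℝ) * N ≤ x := by
    rw [← le_div_iff₀ hNpos]; exact Int.floor_le _
  have f2 : x < (k + 1) * N := by
    rw [← div_lt_iff₀ hNpos]; exact Int.lt_floor_add_one _
  have h1 := hC (x - k * N) ⟨by linarith, by linarith⟩
  have h2 := hm k (x - k * N)
  rw [sub_add_cancel, hlin] at h2
  rw [Real.norm_eq_abs] at h1
  have e : F x - (m 1 / N : ℝ) * x = (F (x - k * N) - (m 1 / N : ℝ) * (x - k * N)) +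
      (F x - F (x - k * N) - ((k * m 1 : ℤ) : ℝ)) := by
    push_cast
    field_simp
    ring
  rw [e]
  exact (abs_add_le _ _).trans (by linarith)

lemma tendsto_of_linear (F : ℝ → ℝ) (q B : ℝ) (h : ∀ x, |F x - q * x| ≤ B) :
    Tendsto (fun x : ℝ => (F x - F (-x)) / (2 * x)) atTop (nhds q) := by
  have hB : Tendsto (fun x : ℝ => B / x) atTop (nhds 0) :=
    tendsto_const_nhds.div_atTop tendsto_id
  rw [tendsto_iff_dist_tendsto_zero]
  refine squeeze_zero' (Eventually.of_forall fun _ => dist_nonneg) ?_ hB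
  filter_upwards [eventually_gt_atTop 0] with x hx
  rw [Real.dist_eq]
  have e : (F x - F (-x)) / (2 * x) - q = ((F x - q * x) - (F (-x) - q * (-x))) / (2 * x) := by
    field_simp
    ring
  rw [e, abs_div, abs_of_pos (by positivity : 0 < 2 * x), div_le_div_iff₀ (by positivity) hx]
  have h1 := abs_sub (F x - q * x) (F (-x) - q * (-x))
  have h2 := h x
  have h3 := h (-x)
  nlinarith

/-- For any pre-periodic function `f`, a lift exists, and for any lift `F` of `f` the limit
`lim_{x → +∞} (F x - F (-x)) / (2x)` exists, is a rational number, and does not depend on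
the choice of the lift: it is the *generalized winding number* of `f`. -/
theorem preperiodic_generalized_winding_number (f : ℝ → ℂ) (hf : PrePeriodic f) :
    (∃ F : ℝ → ℝ, IsLift f F) ∧
      ∃ q : ℚ, ∀ F : ℝ → ℝ, IsLift f F →
        Tendsto (fun x : ℝ => (F x - F (-x)) / (2 * x)) atTop (nhds (q : ℝ)) := by
  obtain ⟨F₀, hF₀⟩ := exists_lift f hf.1 hf.2.1
  obtain ⟨q, B, hB⟩ := lift_linear f hf F₀ hF₀
  refine ⟨⟨F₀, hF₀⟩, q, fun F hF => ?_⟩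
  obtain ⟨m, hm⟩ := near_integer (fun x => F x - F₀ x) (hF.1.sub hF₀.1) (fun x => by
    apply cos_pos_of_close
    rw [← hF.2, ← hF₀.2]
    simp)
  refine tendsto_of_linear F q (B + 1 / 4 + |(m : ℝ)|) fun x => ?_
  have e : F x - q * x = (F₀ x - q * x) + (F x - F₀ x - m) + m := by ring
  rw [e]
  have h1 := abs_add_three (F₀ x - q * x) (F x - F₀ x - m) m
  have h2 := hB x
  have h3 := hm x
  linarith
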